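/- arXiv:1112.4294 — 6 statements merged into one kernel-verified Lean document; each statement's English description precedes it below -/
import Mathlib

section
/- Let n ≥ 1, A ∈ ℝ^{n×n} arbitrary, B ∈ ℝ^{n×n} diagonal and invertible, D ∈ ℝ^{n×n} diagonal, and x0, w0 ∈ ℝⁿ. Consider the closed loop with the deadbeat controller: x_K(0) = 0, x_K(k+1) = D x_K(k) − B^{-1}D² x(k), u(k) = x_K(k) − B^{-1}(A+D) x(k), together with x(0) = x0, w(0) = w0, x(k+1) = A x(k) + B(u(k) + w(k)), w(k+1) = D w(k). Then for every k ≥ 2, x(k) = 0 and u(k) + w(k) = 0; in particular the closed-loop state reaches the origin in two time steps regardless of x0 and w0. -/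
open Matrix

/-!
Since `B u(k)` contains `-(A + D) x(k)`, the closed loop no longer sees `A`:
`x(k+1) = B (x_K(k) + w(k)) - D x(k)`. The term `-B⁻¹ D² x(k)` of the controller is chosen so that
one further step also cancels `D² x(k)`, leaving `x(k+2) = (B D - D B) (x_K(k) + w(k))`, which is
zero when `B` and `D` commute. From then on two consecutive states vanish, so `B (u(k) + w(k)) = 0`.
-/

section DeadbeatLoop

variable {R M : Type*} [Ring R] [AddCommGroup M] [Module R M]

/-- The plant `(A, B)` with state `x`, driven by a disturbance `w` with dynamics `D`, in closed loop
with the deadbeat controller with state `xK` and output `u`. Coefficients are elements of a ring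
acting on the state space, and the initial values `x 0`, `w 0`, `xK 0` are left free. -/
structure IsDeadbeatLoop (A : R) (B : Rˣ) (D : R) (x w xK u : ℕ → M) : Prop where
  controller_succ : ∀ k, xK (k + 1) = D • xK k - (↑B⁻¹ * D ^ 2) • x k
  input_eq : ∀ k, u k = xK k - (↑B⁻¹ * (A + D)) • x k
  state_succ : ∀ k, x (k + 1) = A • x k + (B : R) • (u k + w k)
  disturbance_succ : ∀ k, w (k + 1) = D • w k

namespace IsDeadbeatLoop

variable {A D : R} {B : Rˣ} {x w xK u : ℕ → M}

theorem state_succ_eq_sub (h : IsDeadbeatLoop A B D x w xK u) (k : ℕ) :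
    x (k + 1) = (B : R) • (xK k + w k) - D • x k := by
  rw [h.state_succ, h.input_eq]
  simp only [smul_add, smul_sub, ← mul_smul, Units.mul_inv_cancel_left, add_smul]
  abel

theorem controller_add_disturbance_succ (h : IsDeadbeatLoop A B D x w xK u) (k : ℕ) :
    xK (k + 1) + w (k + 1) = D • (xK k + w k) - (↑B⁻¹ * D ^ 2) • x k := by
  rw [h.controller_succ, h.disturbance_succ, smul_add]
  abel

theorem state_add_two (h : IsDeadbeatLoop A B D x w xK u) (k : ℕ) :
    x (k + 2) = (B * D - D * B) • (xK k + w k) := by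
  calc
    x (k + 2) = (B : R) • (xK (k + 1) + w (k + 1)) - D • x (k + 1) := h.state_succ_eq_sub (k + 1)
    _ = (B : R) • (D • (xK k + w k) - (↑B⁻¹ * D ^ 2) • x k)
          - D • ((B : R) • (xK k + w k) - D • x k) := by
      rw [h.controller_add_disturbance_succ, h.state_succ_eq_sub]
    _ = (B * D) • (xK k + w k) - D ^ 2 • x k - ((D * B) • (xK k + w k) - D ^ 2 • x k) := by
      simp only [smul_sub, ← mul_smul, Units.mul_inv_cancel_left, pow_two]
    _ = (B * D - D * B) • (xK k + w k) := by
      rw [sub_sub_sub_cancel_right, sub_smul]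

theorem input_add_disturbance_eq_zero (h : IsDeadbeatLoop A B D x w xK u) {k : ℕ}
    (hk : x k = 0) (hk' : x (k + 1) = 0) : u k + w k = 0 := by
  have hB : B • (u k + w k) = 0 := by
    simpa only [hk, hk', smul_zero, zero_add, ← Units.smul_def, eq_comm] using h.state_succ k
  exact (smul_eq_zero_iff_eq B).mp hB

end IsDeadbeatLoop

theorem deadbeat_two_steps_general {A D : R} {B : Rˣ} {x w xK u : ℕ → M}
    (hBD : Commute (B : R) D) (h : IsDeadbeatLoop A B D x w xK u) (k : ℕ) (hk : 2 ≤ k) :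
    x k = 0 ∧ u k + w k = 0 := by
  have state_eq_zero (m : ℕ) (hm : 2 ≤ m) : x m = 0 := by
    obtain ⟨j, rfl⟩ := Nat.exists_eq_add_of_le' hm
    rw [h.state_add_two, hBD.eq, sub_self, zero_smul]
  exact ⟨state_eq_zero k hk,
    h.input_add_disturbance_eq_zero (state_eq_zero k hk) (state_eq_zero (k + 1) (by lia))⟩

end DeadbeatLoop

theorem commute_of_isDiag {ι R : Type*} [Fintype ι]
    [NonUnitalNonAssocCommSemiring R] {B D : Matrix ι ι R} (hB : B.IsDiag) (hD : D.IsDiag) :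
    Commute B D := by
  classical
  rw [← hB.diagonal_diag, ← hD.diagonal_diag]
  exact commute_diagonal _ _

/-- **Deadbeat property (Definition 3).** With the deadbeat controller
`x_K(0) = 0`, `x_K(k+1) = D x_K(k) − B⁻¹D² x(k)`, `u(k) = x_K(k) − B⁻¹(A+D) x(k)`
in closed loop with `x(k+1) = A x(k) + B(u(k) + w(k))`, `w(k+1) = D w(k)`,
the closed-loop state reaches the origin in two time steps: for all `k ≥ 2`,
`x(k) = 0` and `u(k) + w(k) = 0`, regardless of `x0` and `w0`. -/
theorem deadbeat_two_steps (n : ℕ) (hn : 1 ≤ n)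
    (A B D : Matrix (Fin n) (Fin n) ℝ)
    (hBdiag : B.IsDiag) (hBinv : IsUnit B.det) (hDdiag : D.IsDiag)
    (x0 w0 : Fin n → ℝ)
    (x w xK u : ℕ → Fin n → ℝ)
    (hx0 : x 0 = x0) (hw0 : w 0 = w0) (hxK0 : xK 0 = 0)
    (hxK : ∀ k, xK (k + 1) = D.mulVec (xK k) - (B⁻¹ * D ^ 2).mulVec (x k))
    (hu : ∀ k, u k = xK k - (B⁻¹ * (A + D)).mulVec (x k))
    (hx : ∀ k, x (k + 1) = A.mulVec (x k) + B.mulVec (u k + w k))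
    (hw : ∀ k, w (k + 1) = D.mulVec (w k)) :
    ∀ k, 2 ≤ k → x k = 0 ∧ u k + w k = 0 := by
  exact deadbeat_two_steps_general (B := B.nonsingInvUnit hBinv)
    (commute_of_isDiag hBdiag hDdiag) ⟨hxK, hu, hx, hw⟩
end

section
/- Let n ≥ 1 and ε_b > 0, and set β = (2ε_b² + 1 + √(4ε_b² + 1))/(2ε_b²). For every A ∈ ℝ^{n×n}, every diagonal B ∈ ℝ^{n×n} with |b_ii| ≥ ε_b for all i, and every diagonal D ∈ ℝ^{n×n}, the 2n×2n symmetric matrix [[βV11 − Q11, βV12 − Q12],[βV12ᵀ − Q12ᵀ, βV22 − Q22]] is positive semidefinite, where W = Aᵀ(I+B²)^{-1}A + I, V11 = W + D²B^{-2} + DWD, V12 = −D(W + B^{-2}), V22 = W + B^{-2}, Q11 = I + D²(I + B^{-2}) + AᵀB^{-2}A + DAᵀB^{-2}AD + AᵀB^{-2}D + DB^{-2}A, Q12 = −D − AᵀB^{-2} − DB^{-2} − DAᵀB^{-2}A, and Q22 = AᵀB^{-2}A + B^{-2} + I. -/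
open Matrix

/-!
Write the vector as `(x, y)` and substitute `z = y - D x`. As `D` is symmetric and commutes with
`B²`, this congruence turns `V` and `Q` into their values at `D = 0`. With `E = (1 + B²)⁻¹` and
`C = B⁻²` the form `β V - Q` becomes `(β - 1)‖x‖² + P(A x, z) + P(A z, 0)`, where `P` has the blocks
`β E - C`, `C`, `C`, `(β - 1)(1 + C)`. Since `C = E (1 + C)`, the Schur complement of the last block
of `P` is `(β - 1) E (B⁻¹ S B⁻¹ + S) E` with `S = B² - β / (β - 1)²`. So `P` is positive
semidefinite as soon as `β / (β - 1)² ≤ ε²`, where `ε²` bounds `B²` from below, and the constant of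
the theorem is the larger root of `β = (β - 1)² ε²`.
-/

/-- The constant `β` of the theorem as a function of `ε_b`: the larger root of
`β = (β - 1) ^ 2 * ε ^ 2`. For `ε = 0` the division makes it `0`. -/
noncomputable def deadbeatRatio (ε : ℝ) : ℝ :=
  (2 * ε ^ 2 + 1 + Real.sqrt (4 * ε ^ 2 + 1)) / (2 * ε ^ 2)

section Ratio

variable {β ε : ℝ}

lemma one_lt_deadbeatRatio (hε : ε ≠ 0) : 1 < deadbeatRatio ε := by
  rw [deadbeatRatio, one_lt_div (by positivity)]
  have := Real.sqrt_nonneg (4 * ε ^ 2 + 1)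
  linarith

lemma div_sub_one_sq_le_sq_of_deadbeatRatio_le (hε : ε ≠ 0) (hβ : deadbeatRatio ε ≤ β) :
    β / (β - 1) ^ 2 ≤ ε ^ 2 := by
  have hβ1 : 0 < β - 1 := sub_pos.2 ((one_lt_deadbeatRatio hε).trans_le hβ)
  have hε2 : 0 < ε ^ 2 := by positivity
  have hsqrt : Real.sqrt (4 * ε ^ 2 + 1) ≤ 2 * ε ^ 2 * (β - 1) - 1 := by
    rw [deadbeatRatio, div_le_iff₀ (by positivity)] at hβ
    linarith
  have hsq : 4 * ε ^ 2 + 1 ≤ (2 * ε ^ 2 * (β - 1) - 1) ^ 2 :=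
    (Real.sqrt_le_left ((Real.sqrt_nonneg _).trans hsqrt)).1 hsqrt
  rw [div_le_iff₀ (by positivity)]
  refine le_of_mul_le_mul_left ?_ hε2
  linarith

end Ratio

section Algebra

variable {ι F R : Type*} [Fintype ι] [DecidableEq ι] [CommRing R] {A B D : Matrix ι ι R}

lemma commute_inv_right {M N : Matrix ι ι R} (h : Commute M N) : Commute M N⁻¹ := by
  simpa only [Matrix.zpow_neg_one] using Matrix.Commute.zpow_right h (-1)

lemma one_add_inv_sq_mul_inv_one_add_sq (hB : IsUnit B) (hB' : IsUnit (1 + B ^ 2)) :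
    (1 + B⁻¹ ^ 2) * (1 + B ^ 2)⁻¹ = B⁻¹ ^ 2 := by
  have := hB.invertible
  have := hB'.invertible
  rw [mul_inv_eq_iff_eq_mul_of_invertible, mul_add, mul_one, inv_pow', inv_mul_of_invertible,
    add_comm]

lemma isUnit_one_add_inv_sq (hB : IsUnit B) (hB' : IsUnit (1 + B ^ 2)) :
    IsUnit (1 + B⁻¹ ^ 2) := by
  have := hB'.invertible
  have h := one_add_inv_sq_mul_inv_one_add_sq hB hB'
  rw [mul_inv_eq_iff_eq_mul_of_invertible] at h
  rw [h]
  exact ((isUnit_nonsing_inv_iff.2 hB).pow 2).mul hB'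

section Kernel

variable [Field F] [Algebra F R] {β : F}

lemma inv_sq_mul_inv_mul_inv_sq (hB : IsUnit B) (hB' : IsUnit (1 + B ^ 2))
    {c : F} (hc : c ≠ 0) :
    B⁻¹ ^ 2 * (c • (1 + B⁻¹ ^ 2))⁻¹ * B⁻¹ ^ 2 = c⁻¹ • (B⁻¹ ^ 2 * (1 + B ^ 2)⁻¹) := by
  have hcN : IsUnit (c • (1 + B⁻¹ ^ 2)).det :=
    (isUnit_iff_isUnit_det _).1 ((isUnit_one_add_inv_sq hB hB').smul (Units.mk0 c hc))
  have hfac : B⁻¹ ^ 2 = c • (1 + B⁻¹ ^ 2) * c⁻¹ • (1 + B ^ 2)⁻¹ := by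
    rw [smul_mul_smul_comm, mul_inv_cancel₀ hc, one_smul,
      one_add_inv_sq_mul_inv_one_add_sq hB hB']
  calc
    B⁻¹ ^ 2 * (c • (1 + B⁻¹ ^ 2))⁻¹ * B⁻¹ ^ 2
      = B⁻¹ ^ 2 * ((c • (1 + B⁻¹ ^ 2))⁻¹ * (c • (1 + B⁻¹ ^ 2) * c⁻¹ • (1 + B ^ 2)⁻¹)) := by
        rw [← hfac, mul_assoc]
    _ = c⁻¹ • (B⁻¹ ^ 2 * (1 + B ^ 2)⁻¹) := by
        rw [nonsing_inv_mul_cancel_left _ _ hcN, mul_smul_comm]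

/-- The form `P` whose values at `(A x, z)` and `(A z, 0)`, where `z = y - D x`, make up the part of
`β • V - Q` that depends on `B`. -/
noncomputable def deadbeatKernel (β : F) (B : Matrix ι ι R) : Matrix (ι ⊕ ι) (ι ⊕ ι) R :=
  fromBlocks (β • (1 + B ^ 2)⁻¹ - B⁻¹ ^ 2) (B⁻¹ ^ 2) (B⁻¹ ^ 2) ((β - 1) • (1 + B⁻¹ ^ 2))

lemma schurComplement_deadbeatKernel (hB : IsUnit B) (hB' : IsUnit (1 + B ^ 2))
    (hβ : β ≠ 1) :
    β • (1 + B ^ 2)⁻¹ - B⁻¹ ^ 2 - B⁻¹ ^ 2 * ((β - 1) • (1 + B⁻¹ ^ 2))⁻¹ * B⁻¹ ^ 2 =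
      (β - 1) • ((1 + B ^ 2)⁻¹ * (B⁻¹ * (B ^ 2 - (β / (β - 1) ^ 2) • 1) * B⁻¹ +
        (B ^ 2 - (β / (β - 1) ^ 2) • 1)) * (1 + B ^ 2)⁻¹) := by
  have hβ1 : β - 1 ≠ 0 := sub_ne_zero.2 hβ
  have := hB.invertible
  have := hB'.invertible
  have hconj : B⁻¹ * (B ^ 2 - (β / (β - 1) ^ 2) • 1) * B⁻¹ + (B ^ 2 - (β / (β - 1) ^ 2) • 1) =
      (1 + B ^ 2) - (β / (β - 1) ^ 2) • (1 + B⁻¹ ^ 2) := by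
    rw [mul_sub, sub_mul, sq B, inv_mul_cancel_left_of_invertible, mul_inv_of_invertible,
      mul_smul_comm, mul_one, smul_mul_assoc, ← sq B⁻¹]
    module
  have hNE := one_add_inv_sq_mul_inv_one_add_sq hB hB'
  have hCE : (1 + B ^ 2)⁻¹ * B⁻¹ ^ 2 = B⁻¹ ^ 2 * (1 + B ^ 2)⁻¹ := by
    rw [inv_pow']
    exact commute_inv_right (commute_inv_right ((Commute.one_right _).add_right (.refl _))).symm
  rw [inv_sq_mul_inv_mul_inv_sq hB hB' hβ1, hconj, mul_sub, sub_mul, inv_mul_of_invertible,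
    one_mul, mul_smul_comm, smul_mul_assoc, mul_assoc, hNE, hCE]
  nth_rw 1 [← hNE]
  rw [add_mul, one_mul]
  match_scalars
  · ring
  · field_simp
    ring

end Kernel

variable [StarRing R]

/-- The matrix `W` of the theorem, with `Aᴴ` for `Aᵀ`. -/
noncomputable def deadbeatW (A B : Matrix ι ι R) : Matrix ι ι R :=
  Aᴴ * (1 + B ^ 2)⁻¹ * A + 1

/-- The block matrix `V` of the theorem, with `Aᴴ` for `Aᵀ`. -/
noncomputable def deadbeatV (A B D : Matrix ι ι R) : Matrix (ι ⊕ ι) (ι ⊕ ι) R :=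
  fromBlocks (deadbeatW A B + D ^ 2 * B⁻¹ ^ 2 + D * deadbeatW A B * D)
    (-(D * (deadbeatW A B + B⁻¹ ^ 2))) (-(D * (deadbeatW A B + B⁻¹ ^ 2)))ᴴ
    (deadbeatW A B + B⁻¹ ^ 2)

/-- The block matrix `Q` of the theorem, with `Aᴴ` for `Aᵀ`. -/
noncomputable def deadbeatQ (A B D : Matrix ι ι R) : Matrix (ι ⊕ ι) (ι ⊕ ι) R :=
  fromBlocks
    (1 + D ^ 2 * (1 + B⁻¹ ^ 2) + Aᴴ * B⁻¹ ^ 2 * A + D * Aᴴ * B⁻¹ ^ 2 * A * D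
      + Aᴴ * B⁻¹ ^ 2 * D + D * B⁻¹ ^ 2 * A)
    (-D - Aᴴ * B⁻¹ ^ 2 - D * B⁻¹ ^ 2 - D * Aᴴ * B⁻¹ ^ 2 * A)
    (-D - Aᴴ * B⁻¹ ^ 2 - D * B⁻¹ ^ 2 - D * Aᴴ * B⁻¹ ^ 2 * A)ᴴ
    (Aᴴ * B⁻¹ ^ 2 * A + B⁻¹ ^ 2 + 1)

lemma deadbeatV_eq_conj (hB : B.IsHermitian) (hD : D.IsHermitian) (hDB : Commute D (B ^ 2)) :
    deadbeatV A B D =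
      (fromBlocks 1 0 (-D) 1)ᴴ * deadbeatV A B 0 * fromBlocks 1 0 (-D) 1 := by
  have hDC : Commute D (B⁻¹ ^ 2) := inv_pow' B 2 ▸ commute_inv_right hDB
  simp only [deadbeatV, deadbeatW, fromBlocks_conjTranspose, fromBlocks_multiply, hD.eq, hB.inv.eq,
    (isHermitian_one.add (hB.pow 2)).inv.eq, conjTranspose_pow, conjTranspose_add,
    conjTranspose_mul, conjTranspose_neg, conjTranspose_zero, conjTranspose_one,
    conjTranspose_conjTranspose]
  congr 1
  all_goals
    simp only [mul_add, add_mul, mul_zero, zero_mul, mul_one, one_mul, mul_neg, neg_mul, mul_assoc,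
      sq D, zero_pow two_ne_zero, hDC.eq, hDC.left_comm]
    module

lemma deadbeatQ_eq_conj (hB : B.IsHermitian) (hD : D.IsHermitian) (hDB : Commute D (B ^ 2)) :
    deadbeatQ A B D =
      (fromBlocks 1 0 (-D) 1)ᴴ * deadbeatQ A B 0 * fromBlocks 1 0 (-D) 1 := by
  have hDC : Commute D (B⁻¹ ^ 2) := inv_pow' B 2 ▸ commute_inv_right hDB
  simp only [deadbeatQ, fromBlocks_conjTranspose, fromBlocks_multiply, hD.eq, hB.inv.eq,
    sub_eq_add_neg, conjTranspose_pow, conjTranspose_add, conjTranspose_mul, conjTranspose_neg,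
    conjTranspose_zero, conjTranspose_one, conjTranspose_conjTranspose]
  congr 1
  all_goals
    simp only [mul_add, add_mul, mul_zero, zero_mul, mul_one, one_mul, mul_neg, neg_mul, mul_assoc,
      sq D, zero_pow two_ne_zero, hDC.eq, hDC.left_comm]
    module

lemma smul_deadbeatV_zero_sub_deadbeatQ_zero [Field F] [Algebra F R] {β : F}
    (hB : B.IsHermitian) :
    β • deadbeatV A B 0 - deadbeatQ A B 0 =
      (β - 1) • ((fromBlocks 1 0 0 0)ᴴ * fromBlocks 1 0 0 0)
      + (fromBlocks A 0 0 1)ᴴ * deadbeatKernel β B * fromBlocks A 0 0 1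
      + (fromBlocks 0 A 0 0)ᴴ * deadbeatKernel β B * fromBlocks 0 A 0 (0 : Matrix ι ι R) := by
  simp only [deadbeatV, deadbeatQ, deadbeatW, deadbeatKernel, fromBlocks_conjTranspose,
    fromBlocks_multiply, fromBlocks_smul, sub_eq_add_neg, fromBlocks_neg, fromBlocks_add, hB.inv.eq,
    conjTranspose_pow, conjTranspose_add, conjTranspose_mul, conjTranspose_neg, conjTranspose_zero,
    conjTranspose_one, conjTranspose_conjTranspose]
  congr 1
  all_goals
    simp only [mul_add, add_mul, mul_zero, zero_mul, mul_one, one_mul, mul_neg, neg_mul,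
      mul_smul_comm, smul_mul_assoc, mul_assoc, sq]
    module

end Algebra

section PosSemidef

open scoped ComplexOrder

variable {ι 𝕜 : Type*} [DecidableEq ι] [RCLike 𝕜]

lemma posSemidef_sub_smul_one_of_le {M : Matrix ι ι 𝕜} {b c : ℝ} (hM : (M - c • 1).PosSemidef)
    (hbc : b ≤ c) : (M - b • 1).PosSemidef := by
  have h : ((c - b) • (1 : Matrix ι ι 𝕜)).PosSemidef := PosSemidef.one.smul (sub_nonneg.2 hbc)
  simpa only [sub_smul, sub_add_sub_cancel] using hM.add h

variable [Fintype ι] {A B D : Matrix ι ι 𝕜} {β c : ℝ}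

lemma isUnit_of_posSemidef_sq_sub_smul_one (hc : 0 < c) (hcB : (B ^ 2 - c • 1).PosSemidef) :
    IsUnit B := by
  have h : (c • (1 : Matrix ι ι 𝕜)).PosDef := PosDef.one.smul hc
  have hpos : (B ^ 2).PosDef := by simpa only [sub_add_cancel] using PosDef.posSemidef_add hcB h
  exact (isUnit_pow_iff two_ne_zero).1 hpos.isUnit

lemma posDef_one_add_sq (hB : B.IsHermitian) : (1 + B ^ 2).PosDef := by
  simpa only [sq, hB.eq] using PosDef.one.add_posSemidef (posSemidef_conjTranspose_mul_self B)

lemma posSemidef_deadbeatKernel (hB : B.IsHermitian) (hβ : 1 < β)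
    (hβB : (B ^ 2 - (β / (β - 1) ^ 2) • 1).PosSemidef) : (deadbeatKernel β B).PosSemidef := by
  have hβ1 : 0 < β - 1 := sub_pos.2 hβ
  have hBu : IsUnit B := isUnit_of_posSemidef_sq_sub_smul_one (by positivity) hβB
  have hN : ((β - 1) • (1 + B⁻¹ ^ 2)).PosDef := (posDef_one_add_sq hB.inv).smul hβ1
  have := hN.isUnit.invertible
  have hschur := hN.fromBlocks₂₂ (β • (1 + B ^ 2)⁻¹ - B⁻¹ ^ 2) (B⁻¹ ^ 2)
  rw [(hB.inv.pow 2).eq, schurComplement_deadbeatKernel hBu (posDef_one_add_sq hB).isUnit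
    hβ.ne'] at hschur
  have hconj := hβB.mul_mul_conjTranspose_same B⁻¹
  rw [hB.inv.eq] at hconj
  have hE := (hconj.add hβB).mul_mul_conjTranspose_same (1 + B ^ 2)⁻¹
  rw [(posDef_one_add_sq hB).isHermitian.inv.eq] at hE
  exact hschur.2 (hE.smul hβ1.le)

theorem deadbeat_quadratic_form_psd_general {ε : ℝ} (hε : ε ≠ 0) (hβ : deadbeatRatio ε ≤ β)
    (hB : B.IsHermitian) (hεB : (B ^ 2 - ε ^ 2 • 1).PosSemidef) (hD : D.IsHermitian)
    (hDB : Commute D (B ^ 2)) : (β • deadbeatV A B D - deadbeatQ A B D).PosSemidef := by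
  have hβ1 : 1 < β := (one_lt_deadbeatRatio hε).trans_le hβ
  have hP : (deadbeatKernel β B).PosSemidef := posSemidef_deadbeatKernel hB hβ1 <|
    posSemidef_sub_smul_one_of_le hεB (div_sub_one_sq_le_sq_of_deadbeatRatio_le hε hβ)
  have hzero : (β • deadbeatV A B 0 - deadbeatQ A B 0).PosSemidef := by
    rw [smul_deadbeatV_zero_sub_deadbeatQ_zero hB]
    exact (((posSemidef_conjTranspose_mul_self _).smul (sub_nonneg.2 hβ1.le)).add
      (hP.conjTranspose_mul_mul_same _)).add (hP.conjTranspose_mul_mul_same _)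
  rw [deadbeatV_eq_conj hB hD hDB, deadbeatQ_eq_conj hB hD hDB, ← smul_mul_assoc, ← mul_smul_comm,
    ← sub_mul, ← mul_sub]
  exact hzero.conjTranspose_mul_mul_same _

end PosSemidef

section Diagonal

variable {ι : Type*} [Fintype ι]

lemma commute_of_isDiag_s5 {R : Type*} [CommSemiring R] {A B : Matrix ι ι R} (hA : A.IsDiag)
    (hB : B.IsDiag) : Commute A B := by
  classical
  rw [← hA.diagonal_diag, ← hB.diagonal_diag]
  exact commute_diagonal _ _

lemma posSemidef_sq_sub_smul_one_of_isDiag [DecidableEq ι] {B : Matrix ι ι ℝ} {ε : ℝ}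
    (hB : B.IsDiag) (hε : 0 ≤ ε) (hεB : ∀ i, ε ≤ |B i i|) : (B ^ 2 - ε ^ 2 • 1).PosSemidef := by
  rw [← hB.diagonal_diag, diagonal_pow, smul_one_eq_diagonal, diagonal_sub, posSemidef_diagonal_iff]
  intro i
  simpa using pow_le_pow_left₀ hε (hεB i) 2

end Diagonal

/-- **Key matrix inequality in Lemma 3.** With `β = (2ε_b² + 1 + √(4ε_b² + 1))/(2ε_b²)`, for
every `A`, every diagonal `B` with `|b_ii| ≥ ε_b` and every diagonal `D`, the symmetric
matrix `[[βV11 − Q11, βV12 − Q12],[βV12ᵀ − Q12ᵀ, βV22 − Q22]]` is positive semidefinite,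
i.e. `vᵀ M v ≥ 0` for all vectors `v`. -/
theorem deadbeat_quadratic_form_psd (n : ℕ) (hn : 1 ≤ n) (εb : ℝ) (hεb : 0 < εb)
    (β : ℝ) (hβ : β = (2 * εb ^ 2 + 1 + Real.sqrt (4 * εb ^ 2 + 1)) / (2 * εb ^ 2))
    (A B D : Matrix (Fin n) (Fin n) ℝ)
    (hBdiag : B.IsDiag) (hB : ∀ i, εb ≤ |B i i|) (hDdiag : D.IsDiag)
    (W V11 V12 V22 Q11 Q12 Q22 : Matrix (Fin n) (Fin n) ℝ)
    (hW : W = Aᵀ * (1 + B ^ 2)⁻¹ * A + 1)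
    (hV11 : V11 = W + D ^ 2 * B⁻¹ ^ 2 + D * W * D)
    (hV12 : V12 = -(D * (W + B⁻¹ ^ 2)))
    (hV22 : V22 = W + B⁻¹ ^ 2)
    (hQ11 : Q11 = 1 + D ^ 2 * (1 + B⁻¹ ^ 2) + Aᵀ * B⁻¹ ^ 2 * A
        + D * Aᵀ * B⁻¹ ^ 2 * A * D + Aᵀ * B⁻¹ ^ 2 * D + D * B⁻¹ ^ 2 * A)
    (hQ12 : Q12 = -D - Aᵀ * B⁻¹ ^ 2 - D * B⁻¹ ^ 2 - D * Aᵀ * B⁻¹ ^ 2 * A)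
    (hQ22 : Q22 = Aᵀ * B⁻¹ ^ 2 * A + B⁻¹ ^ 2 + 1) :
    ∀ v : Fin n ⊕ Fin n → ℝ,
      0 ≤ v ⬝ᵥ ((Matrix.fromBlocks (β • V11 - Q11) (β • V12 - Q12)
          (β • V12ᵀ - Q12ᵀ) (β • V22 - Q22)).mulVec v) := by
  have hpsd := deadbeat_quadratic_form_psd_general (A := A) hεb.ne' hβ.ge
    (isHermitian_iff_isSymm.2 hBdiag.isSymm)
    (posSemidef_sq_sub_smul_one_of_isDiag hBdiag hεb.le hB)
    (isHermitian_iff_isSymm.2 hDdiag.isSymm) ((commute_of_isDiag_s5 hDdiag hBdiag).pow_right 2)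
  subst hW hV11 hV12 hV22 hQ11 hQ12 hQ22
  simpa only [deadbeatV, deadbeatQ, deadbeatW, fromBlocks_smul, sub_eq_add_neg, fromBlocks_neg,
    fromBlocks_add, conjTranspose_eq_transpose_of_trivial, star_trivial]
    using fun v ↦ hpsd.dotProduct_mulVec_nonneg v
end

section
/- Let ε > 0 and set β = (2ε² + 1 + √(4ε² + 1))/(2ε²). Then β ≥ 1 + 1/ε², and for every real b with b² ≥ ε², β/(1 + b²) − 1/b² − 1/((β − 1)·b²·(1 + b²)) ≥ 0. -/
/-!
With `t = ε²`, the number `β` is the larger root of the quadratic equation `t (β - 1)² = β`, and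
both claims follow from `1 < β ≤ t (β - 1)²`. Since `β - 1 < β`, dividing by `β - 1` gives
`1 ≤ t (β - 1)`, the lower bound for `β`. Over a common denominator, the expression in `b` has
numerator `b² (β - 1)² - β`, which is nonnegative because `b² ≥ t`.
-/

section Field

variable {K : Type*} [Field K]

lemma mul_sub_one_sq_eq_self_iff [NeZero (2 : K)] {t s : K} (ht : t ≠ 0)
    (hs : s * s = 4 * t + 1) (β : K) :
    t * (β - 1) ^ 2 = β ↔ β = (2 * t + 1 + s) / (2 * t) ∨ β = (2 * t + 1 - s) / (2 * t) := by
  have hdiscrim : discrim t (-(2 * t + 1)) t = s * s := by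
    rw [hs, discrim]
    ring
  have hexpand : t * (β - 1) ^ 2 - β = t * (β * β) + -(2 * t + 1) * β + t := by ring
  rw [← sub_eq_zero, hexpand, quadratic_eq_zero_iff ht hdiscrim, neg_neg]

lemma div_one_add_sub_one_div_sub_one_div_mul {β x : K} (hβ : β ≠ 1) (hx : x ≠ 0)
    (hx' : 1 + x ≠ 0) :
    β / (1 + x) - 1 / x - 1 / ((β - 1) * x * (1 + x)) =
      (x * (β - 1) ^ 2 - β) / ((β - 1) * x * (1 + x)) := by
  have hβ' : β - 1 ≠ 0 := sub_ne_zero.2 hβ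
  field_simp
  ring

end Field

section LinearOrderedField

variable {K : Type*} [Field K] [LinearOrder K] [IsStrictOrderedRing K]

lemma one_add_one_div_le_of_le_mul_sub_one_sq {β t : K} (hβ : 1 < β)
    (h : β ≤ t * (β - 1) ^ 2) : 1 + 1 / t ≤ β := by
  have hβ' : 0 < β - 1 := sub_pos.2 hβ
  have hone_le : 1 ≤ (β - 1) * t := by
    refine le_of_mul_le_mul_right ?_ hβ'
    calc 1 * (β - 1) ≤ β := by linarith
      _ ≤ t * (β - 1) ^ 2 := h
      _ = (β - 1) * t * (β - 1) := by ring
  have ht : 0 < t := pos_of_mul_pos_right (one_pos.trans_le hone_le) hβ'.le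
  rwa [← le_sub_iff_add_le', div_le_iff₀ ht]

lemma div_one_add_sub_one_div_sub_one_div_mul_nonneg_iff {β x : K} (hβ : 1 < β) (hx : 0 < x) :
    0 ≤ β / (1 + x) - 1 / x - 1 / ((β - 1) * x * (1 + x)) ↔ β ≤ x * (β - 1) ^ 2 := by
  have hx' : 0 < 1 + x := add_pos one_pos hx
  have hden : 0 < (β - 1) * x * (1 + x) := mul_pos (mul_pos (sub_pos.2 hβ) hx) hx'
  rw [div_one_add_sub_one_div_sub_one_div_mul hβ.ne' hx.ne' hx'.ne', le_div_iff₀ hden, zero_mul,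
    sub_nonneg]

end LinearOrderedField

/-- Let `ε > 0` and `β = (2ε² + 1 + √(4ε² + 1))/(2ε²)`. Then `β ≥ 1 + 1/ε²`, and for every
real `b` with `b² ≥ ε²`, `β/(1 + b²) − 1/b² − 1/((β − 1)·b²·(1 + b²)) ≥ 0`. -/
theorem beta_scalar_inequalities (ε : ℝ) (hε : 0 < ε) (β : ℝ)
    (hβ : β = (2 * ε ^ 2 + 1 + Real.sqrt (4 * ε ^ 2 + 1)) / (2 * ε ^ 2)) :
    1 + 1 / ε ^ 2 ≤ β ∧
      ∀ b : ℝ, ε ^ 2 ≤ b ^ 2 →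
        0 ≤ β / (1 + b ^ 2) - 1 / b ^ 2 - 1 / ((β - 1) * b ^ 2 * (1 + b ^ 2)) := by
  have hε_sq : 0 < ε ^ 2 := by positivity
  have one_lt_β : 1 < β := by
    rw [hβ, one_lt_div (by positivity)]
    linarith [Real.sqrt_nonneg (4 * ε ^ 2 + 1)]
  have hroot : ε ^ 2 * (β - 1) ^ 2 = β :=
    (mul_sub_one_sq_eq_self_iff hε_sq.ne' (Real.mul_self_sqrt (by positivity)) β).2 (.inl hβ)
  refine ⟨one_add_one_div_le_of_le_mul_sub_one_sq one_lt_β hroot.ge, fun b hb ↦ ?_⟩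
  rw [div_one_add_sub_one_div_sub_one_div_mul_nonneg_iff one_lt_β (hε_sq.trans_le hb)]
  calc β = ε ^ 2 * (β - 1) ^ 2 := hroot.symm
    _ ≤ b ^ 2 * (β - 1) ^ 2 := by gcongr
end

section
/- Let n ≥ 1, A ∈ ℝ^{n×n}, B ∈ ℝ^{n×n} diagonal and invertible, D ∈ ℝ^{n×n} diagonal. Define Ã = [[A, B],[0, D]] ∈ ℝ^{2n×2n} and B̃ = [[0],[I]] ∈ ℝ^{2n×n}, and for ρ > 0 define X₁(ρ) = Ãᵀ(I + ρ^{-1}B̃B̃ᵀ)^{-1}Ã + I. Then, as ρ tends to 0 from the right, the matrix X₁(ρ) − X₁(ρ)B̃(ρI + B̃ᵀX₁(ρ)B̃)^{-1}B̃ᵀX₁(ρ) converges to the block-diagonal matrix [[W, 0],[0, 0]], where W = Aᵀ(I + B²)^{-1}A + I. -/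
open Matrix Filter Topology

/-!
Both inverses come from the same operation, the Riccati update `X ↦ X - X B (R + Bᴴ X B)⁻¹ Bᴴ X`:
by the Woodbury identity `(1 + ρ⁻¹ B̃ B̃ᴴ)⁻¹` is the update of the identity matrix with input weight
`R = ρ`, so the matrix in question is obtained by two successive updates. The update is jointly
continuous in `(R, X)` wherever `R + Bᴴ X B` is invertible, hence one may put `ρ = 0`. There the
update along `B̃ = [0; 1]` replaces `X` by the Schur complement of its lower right block, padded
with zeros; a second use of Woodbury rewrites that Schur complement as `Aᴴ (1 + B Bᴴ)⁻¹ A + 1`.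
-/

section RiccatiUpdate

variable {ι κ 𝕜 : Type*} [Fintype ι] [Fintype κ] [DecidableEq κ]

/-- The Riccati update of the weight `X` along the input matrix `B` with input weight `R`: for `X`
Hermitian and `R + Bᴴ X B` positive definite, the matrix of the quadratic form
`x ↦ min_u (x + B u)ᴴ X (x + B u) + uᴴ R u`. For `R + Bᴴ X B` singular the inverse is `0`. -/
noncomputable def riccatiUpdate [CommRing 𝕜] [StarRing 𝕜] (B : Matrix ι κ 𝕜) (R : Matrix κ κ 𝕜)
    (X : Matrix ι ι 𝕜) : Matrix ι ι 𝕜 :=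
  X - X * B * (R + Bᴴ * X * B)⁻¹ * Bᴴ * X

theorem conjTranspose_fromRows_zero_one_mul_fromBlocks [Semiring 𝕜] [StarRing 𝕜]
    (P : Matrix ι ι 𝕜) (Q : Matrix ι κ 𝕜) (S : Matrix κ ι 𝕜) (T : Matrix κ κ 𝕜) :
    (fromRows (0 : Matrix ι κ 𝕜) (1 : Matrix κ κ 𝕜))ᴴ * fromBlocks P Q S T = fromCols S T := by
  simp [conjTranspose_fromRows_eq_fromCols_conjTranspose, fromCols_mul_fromBlocks]

theorem conjTranspose_fromRows_zero_one_mul_fromBlocks_mul_self [Semiring 𝕜] [StarRing 𝕜]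
    (P : Matrix ι ι 𝕜) (Q : Matrix ι κ 𝕜) (S : Matrix κ ι 𝕜) (T : Matrix κ κ 𝕜) :
    (fromRows (0 : Matrix ι κ 𝕜) (1 : Matrix κ κ 𝕜))ᴴ * fromBlocks P Q S T *
      fromRows (0 : Matrix ι κ 𝕜) (1 : Matrix κ κ 𝕜) = T := by
  simp [conjTranspose_fromRows_zero_one_mul_fromBlocks, fromCols_mul_fromRows]

theorem riccatiUpdate_fromRows_zero_one [CommRing 𝕜] [StarRing 𝕜]
    (P : Matrix ι ι 𝕜) (Q : Matrix ι κ 𝕜) (S : Matrix κ ι 𝕜) {T : Matrix κ κ 𝕜} (hT : IsUnit T) :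
    riccatiUpdate (fromRows 0 (1 : Matrix κ κ 𝕜)) 0 (fromBlocks P Q S T) =
      fromBlocks (P - Q * T⁻¹ * S) 0 0 0 := by
  have hT' : IsUnit T.det := (isUnit_iff_isUnit_det T).mp hT
  have hcol : fromBlocks P Q S T * fromRows (0 : Matrix ι κ 𝕜) (1 : Matrix κ κ 𝕜) =
      fromRows Q T := by
    simp [fromBlocks_mul_fromRows]
  rw [riccatiUpdate, conjTranspose_fromRows_zero_one_mul_fromBlocks_mul_self, zero_add,
    Matrix.mul_assoc _ (fromRows 0 1)ᴴ, conjTranspose_fromRows_zero_one_mul_fromBlocks, hcol,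
    fromRows_mul, fromRows_mul_fromCols, mul_nonsing_inv T hT',
    nonsing_inv_mul_cancel_right T Q hT', Matrix.one_mul, Matrix.one_mul, sub_eq_add_neg,
    fromBlocks_neg, fromBlocks_add]
  simp only [← sub_eq_add_neg, sub_self]

theorem tendsto_riccatiUpdate [Field 𝕜] [StarRing 𝕜] [TopologicalSpace 𝕜]
    [IsTopologicalDivisionRing 𝕜] {α : Type*} {l : Filter α} {B : Matrix ι κ 𝕜}
    {R : α → Matrix κ κ 𝕜} {R₀ : Matrix κ κ 𝕜} {X : α → Matrix ι ι 𝕜} {X₀ : Matrix ι ι 𝕜}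
    (hR : Tendsto R l (𝓝 R₀)) (hX : Tendsto X l (𝓝 X₀)) (h : IsUnit (R₀ + Bᴴ * X₀ * B)) :
    Tendsto (fun t => riccatiUpdate B (R t) (X t)) l (𝓝 (riccatiUpdate B R₀ X₀)) := by
  have hinv : ContinuousAt Inv.inv (R₀ + Bᴴ * X₀ * B) := by
    refine continuousAt_matrix_inv _ ?_
    rw [Ring.inverse_eq_inv']
    exact continuousAt_inv₀ ((isUnit_iff_isUnit_det _).mp h).ne_zero
  have hgram : Continuous fun p : Matrix κ κ 𝕜 × Matrix ι ι 𝕜 => p.1 + Bᴴ * p.2 * B := by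
    fun_prop
  have hgram_inv : Tendsto (fun t => (R t + Bᴴ * X t * B)⁻¹) l (𝓝 (R₀ + Bᴴ * X₀ * B)⁻¹) :=
    hinv.tendsto.comp ((hgram.tendsto (R₀, X₀)).comp (hR.prodMk_nhds hX))
  have hupdate : Continuous fun q : Matrix ι ι 𝕜 × Matrix κ κ 𝕜 =>
      q.1 - q.1 * B * q.2 * Bᴴ * q.1 := by
    fun_prop
  exact (hupdate.tendsto (X₀, _)).comp (hX.prodMk_nhds hgram_inv)

theorem tendsto_riccatiUpdate_fromRows_zero_one [Field 𝕜] [StarRing 𝕜] [TopologicalSpace 𝕜]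
    [IsTopologicalDivisionRing 𝕜] {α : Type*} {l : Filter α} {R : α → Matrix κ κ 𝕜}
    {X : α → Matrix (ι ⊕ κ) (ι ⊕ κ) 𝕜} {P : Matrix ι ι 𝕜} {Q : Matrix ι κ 𝕜} {S : Matrix κ ι 𝕜}
    {T : Matrix κ κ 𝕜} (hR : Tendsto R l (𝓝 0)) (hX : Tendsto X l (𝓝 (fromBlocks P Q S T)))
    (hT : IsUnit T) :
    Tendsto (fun t => riccatiUpdate (fromRows 0 1) (R t) (X t)) l
      (𝓝 (fromBlocks (P - Q * T⁻¹ * S) 0 0 0)) := by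
  rw [← riccatiUpdate_fromRows_zero_one P Q S hT]
  exact tendsto_riccatiUpdate hR hX
    (by rwa [zero_add, conjTranspose_fromRows_zero_one_mul_fromBlocks_mul_self])

open scoped ComplexOrder in
theorem riccatiUpdate_eq_inv [RCLike 𝕜] [DecidableEq ι] (B : Matrix ι κ 𝕜) {R : Matrix κ κ 𝕜}
    {X : Matrix ι ι 𝕜} (hR : R.PosDef) (hX : X.PosDef) :
    riccatiUpdate B R X = (X⁻¹ + B * R⁻¹ * Bᴴ)⁻¹ := by
  have hgram : (R + Bᴴ * X * B).PosDef :=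
    hR.add_posSemidef (hX.posSemidef.conjTranspose_mul_mul_same B)
  have hXinv : X⁻¹⁻¹ = X := nonsing_inv_nonsing_inv X hX.det_pos.ne'.isUnit
  have hRinv : R⁻¹⁻¹ = R := nonsing_inv_nonsing_inv R hR.det_pos.ne'.isUnit
  rw [add_mul_mul_inv_eq_sub _ _ _ _ hX.inv.isUnit hR.inv.isUnit
    (by rw [hXinv, hRinv]; exact hgram.isUnit), hXinv, hRinv, riccatiUpdate]

end RiccatiUpdate

section CheapControl

theorem conjTranspose_mul_fromBlocks_one_mul_add_one {m k l r α : Type*} [Fintype m] [Fintype k]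
    [DecidableEq m] [DecidableEq l] [DecidableEq r] [Semiring α] [StarRing α] (A : Matrix m l α)
    (B : Matrix m r α) (C : Matrix k l α) (D : Matrix k r α) :
    (fromBlocks A B C D)ᴴ * (fromBlocks 1 0 0 0 : Matrix (m ⊕ k) (m ⊕ k) α) *
      fromBlocks A B C D + 1 = fromBlocks (Aᴴ * A + 1) (Aᴴ * B) (Bᴴ * A) (Bᴴ * B + 1) := by
  simp [fromBlocks_conjTranspose, fromBlocks_multiply, ← fromBlocks_one, fromBlocks_add]

theorem tendsto_smul_nhdsGT_zero {E : Type*} [AddCommMonoid E] [Module ℝ E] [TopologicalSpace E]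
    [ContinuousSMul ℝ E] (x : E) : Tendsto (fun ρ : ℝ => ρ • x) (𝓝[>] 0) (𝓝 0) :=
  tendsto_nhdsWithin_of_tendsto_nhds (Continuous.tendsto' (by fun_prop) _ _ (zero_smul ℝ x))

open scoped ComplexOrder

variable {m k 𝕜 : Type*} [Fintype m] [Fintype k] [DecidableEq k] [RCLike 𝕜]

theorem isUnit_conjTranspose_mul_self_add_one (B : Matrix m k 𝕜) : IsUnit (Bᴴ * B + 1) :=
  (PosDef.posSemidef_add (posSemidef_conjTranspose_mul_self B) PosDef.one).isUnit

variable [DecidableEq m]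

theorem inv_one_add_inv_smul_mul_conjTranspose (B : Matrix m k 𝕜) {ρ : ℝ} (hρ : 0 < ρ) :
    (1 + ρ⁻¹ • (B * Bᴴ))⁻¹ = riccatiUpdate B (ρ • 1) 1 := by
  have hinv : (ρ • (1 : Matrix k k 𝕜))⁻¹ = ρ⁻¹ • 1 :=
    inv_eq_right_inv (by simp [smul_smul, hρ.ne'])
  rw [riccatiUpdate_eq_inv B (PosDef.one.smul hρ) PosDef.one, hinv]
  simp

theorem tendsto_inv_one_add_inv_smul_fromRows_zero_one :
    Tendsto (fun ρ : ℝ => (1 + ρ⁻¹ • (fromRows (0 : Matrix m k 𝕜) (1 : Matrix k k 𝕜) *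
        (fromRows (0 : Matrix m k 𝕜) (1 : Matrix k k 𝕜))ᴴ))⁻¹)
      (𝓝[>] 0) (𝓝 (fromBlocks 1 0 0 0)) := by
  have hupdate : Tendsto
      (fun ρ : ℝ => riccatiUpdate (fromRows (0 : Matrix m k 𝕜) (1 : Matrix k k 𝕜)) (ρ • 1) 1)
      (𝓝[>] 0) (𝓝 (fromBlocks 1 0 0 0)) := by
    simpa using tendsto_riccatiUpdate_fromRows_zero_one (P := (1 : Matrix m m 𝕜)) (Q := 0) (S := 0)
      (tendsto_smul_nhdsGT_zero (1 : Matrix k k 𝕜))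
      (tendsto_const_nhds.congr fun _ => fromBlocks_one) isUnit_one
  refine hupdate.congr' ?_
  filter_upwards [self_mem_nhdsWithin] with ρ hρ
  exact (inv_one_add_inv_smul_mul_conjTranspose _ hρ).symm

theorem schur_complement_gram_add_one {l : Type*} [DecidableEq l] (A : Matrix m l 𝕜)
    (B : Matrix m k 𝕜) :
    Aᴴ * A + 1 - Aᴴ * B * (Bᴴ * B + 1)⁻¹ * (Bᴴ * A) = Aᴴ * (1 + B * Bᴴ)⁻¹ * A + 1 := by
  have hwoodbury : (1 + B * Bᴴ)⁻¹ = 1 - B * (Bᴴ * B + 1)⁻¹ * Bᴴ := by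
    simpa [riccatiUpdate, add_comm] using inv_one_add_inv_smul_mul_conjTranspose B one_pos
  rw [hwoodbury]
  simp only [Matrix.mul_sub, Matrix.sub_mul, Matrix.mul_one, Matrix.mul_assoc]
  abel

theorem riccati_limit_general (A : Matrix m m 𝕜) (B : Matrix m k 𝕜) (C : Matrix k m 𝕜)
    (D : Matrix k k 𝕜) (Atil : Matrix (m ⊕ k) (m ⊕ k) 𝕜) (hAtil : Atil = fromBlocks A B C D)
    (Btil : Matrix (m ⊕ k) k 𝕜) (hBtil : Btil = fromRows 0 1)
    (X₁ : ℝ → Matrix (m ⊕ k) (m ⊕ k) 𝕜)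
    (hX₁ : ∀ ρ : ℝ, 0 < ρ → X₁ ρ = Atilᴴ * (1 + ρ⁻¹ • (Btil * Btilᴴ))⁻¹ * Atil + 1) :
    Tendsto
      (fun ρ : ℝ =>
        X₁ ρ - X₁ ρ * Btil * (ρ • (1 : Matrix k k 𝕜) + Btilᴴ * X₁ ρ * Btil)⁻¹ * Btilᴴ * X₁ ρ)
      (𝓝[>] 0) (𝓝 (fromBlocks (Aᴴ * (1 + B * Bᴴ)⁻¹ * A + 1) 0 0 0)) := by
  subst hAtil hBtil
  have hX₁_lim : Tendsto X₁ (𝓝[>] 0)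
      (𝓝 (fromBlocks (Aᴴ * A + 1) (Aᴴ * B) (Bᴴ * A) (Bᴴ * B + 1))) := by
    have hcont : Continuous fun Y : Matrix (m ⊕ k) (m ⊕ k) 𝕜 =>
        (fromBlocks A B C D)ᴴ * Y * fromBlocks A B C D + 1 := by
      fun_prop
    rw [← conjTranspose_mul_fromBlocks_one_mul_add_one A B C D]
    refine ((hcont.tendsto _).comp tendsto_inv_one_add_inv_smul_fromRows_zero_one).congr' ?_
    filter_upwards [self_mem_nhdsWithin] with ρ hρ
    exact (hX₁ ρ hρ).symm
  rw [← schur_complement_gram_add_one]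
  exact tendsto_riccatiUpdate_fromRows_zero_one (tendsto_smul_nhdsGT_zero _) hX₁_lim
    (isUnit_conjTranspose_mul_self_add_one B)

end CheapControl

/-- **Limit computation in the proof of Lemma 2.** For `ρ > 0`, let
`X₁(ρ) = Ãᵀ(I + ρ⁻¹B̃B̃ᵀ)⁻¹Ã + I` with `Ã = [[A, B],[0, D]]`, `B̃ = [[0],[I]]`. Then
`X₁(ρ) − X₁(ρ)B̃(ρI + B̃ᵀX₁(ρ)B̃)⁻¹B̃ᵀX₁(ρ) → [[W, 0],[0, 0]]` as `ρ → 0⁺`,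
where `W = Aᵀ(I + B²)⁻¹A + I`. -/
theorem riccati_limit (n : ℕ) (hn : 1 ≤ n)
    (A B D : Matrix (Fin n) (Fin n) ℝ)
    (hBdiag : B.IsDiag) (hBinv : IsUnit B.det) (hDdiag : D.IsDiag)
    (Atil : Matrix (Fin n ⊕ Fin n) (Fin n ⊕ Fin n) ℝ)
    (hAtil : Atil = Matrix.fromBlocks A B 0 D)
    (Btil : Matrix (Fin n ⊕ Fin n) (Fin n) ℝ)
    (hBtil : Btil = Matrix.fromRows (0 : Matrix (Fin n) (Fin n) ℝ) (1 : Matrix (Fin n) (Fin n) ℝ))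
    (X₁ : ℝ → Matrix (Fin n ⊕ Fin n) (Fin n ⊕ Fin n) ℝ)
    (hX₁ : ∀ ρ : ℝ, X₁ ρ = Atilᵀ * (1 + ρ⁻¹ • (Btil * Btilᵀ))⁻¹ * Atil + 1) :
    Tendsto
      (fun ρ : ℝ =>
        X₁ ρ - X₁ ρ * Btil * (ρ • (1 : Matrix (Fin n) (Fin n) ℝ) + Btilᵀ * X₁ ρ * Btil)⁻¹
          * Btilᵀ * X₁ ρ)
      (nhdsWithin 0 (Set.Ioi 0))
      (nhds (Matrix.fromBlocks (Aᵀ * (1 + B ^ 2)⁻¹ * A + 1) 0 0 0)) := by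
  have hsymm : Bᵀ = B := hBdiag.isSymm
  simpa [conjTranspose_eq_transpose_of_trivial, hsymm, pow_two] using
    riccati_limit_general A B 0 D Atil hAtil Btil hBtil X₁ fun ρ _ => by
      simpa [conjTranspose_eq_transpose_of_trivial] using hX₁ ρ
end

section
/- Let n ≥ 1, let B, D ∈ ℝ^{n×n} be diagonal with B invertible, and let X11, X12, X22 ∈ ℝ^{n×n} with X11 symmetric, X22 symmetric and invertible, and suppose the sub-Riccati relation X22 − I = B X11 B − B X12 X22^{-1} X12ᵀ B holds. Then for all x0, w0 ∈ ℝⁿ, setting ξ0 = −(X22^{-1}X12ᵀ + DB^{-1})x0 + w0, one has [x0; ξ0]ᵀ [[X11, X12],[X12ᵀ, X22]] [x0; ξ0] = [x0; w0]ᵀ [[B^{-1}(X22 + D X22 D − I)B^{-1}, −B^{-1}D X22],[−X22 D B^{-1}, X22]] [x0; w0]. -/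
open Matrix

/-!
Completing the square in the second variable (`schur_complement_eq₂₂`) splits a block form with
Hermitian corner `Y` into a square in `Y` plus the form of the Schur complement of `Y` in the first
variable. With `Y = X22` and `E = D * B⁻¹`, both sides of the identity have the same square
`(w - E x)ᴴ Y (w - E x)`. The right-hand blocks have Schur complement `B⁻¹ * (Y - 1) * B⁻¹`, and the
sub-Riccati relation says that the left-hand blocks have the same one.
-/

section Shift

variable {R m n : Type*} [CommRing R] [StarRing R] [Fintype m] [Fintype n] [DecidableEq n]

theorem star_dotProduct_fromBlocks_mulVec_shift (X : Matrix m m R) (Z : Matrix m n R)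
    {Y : Matrix n n R} [Invertible Y] (hY : Y.IsHermitian) (E : Matrix n m R)
    (x : m → R) (w : n → R) :
    star (x ⊕ᵥ (-((Y⁻¹ * Zᴴ + E) *ᵥ x) + w)) ⬝ᵥ
        fromBlocks X Z Zᴴ Y *ᵥ (x ⊕ᵥ (-((Y⁻¹ * Zᴴ + E) *ᵥ x) + w)) =
      star (x ⊕ᵥ w) ⬝ᵥ
        fromBlocks (X - Z * Y⁻¹ * Zᴴ + Eᴴ * Y * E) (-(Eᴴ * Y)) (-(Y * E)) Y *ᵥ (x ⊕ᵥ w) := by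
  have hadj : (-(Eᴴ * Y))ᴴ = -(Y * E) := by
    rw [conjTranspose_neg, conjTranspose_mul, conjTranspose_conjTranspose, hY.eq]
  have hcross : Y⁻¹ * -(Y * E) = -E := by
    rw [Matrix.mul_neg, inv_mul_cancel_left_of_invertible]
  have hsquare : (Y⁻¹ * Zᴴ) *ᵥ x + (-((Y⁻¹ * Zᴴ + E) *ᵥ x) + w) = -E *ᵥ x + w := by
    simp only [neg_mulVec, add_mulVec]
    abel
  have hschur : X - Z * Y⁻¹ * Zᴴ + Eᴴ * Y * E - -(Eᴴ * Y) * Y⁻¹ * -(Y * E) =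
      X - Z * Y⁻¹ * Zᴴ := by
    rw [Matrix.mul_assoc (-(Eᴴ * Y)), hcross, Matrix.neg_mul, Matrix.mul_neg, neg_neg,
      add_sub_cancel_right]
  rw [dotProduct_mulVec, dotProduct_mulVec, schur_complement_eq₂₂ X Z _ _ hY, hsquare, ← hadj,
    schur_complement_eq₂₂ _ _ _ _ hY, hadj, hcross, hschur]

end Shift

section Riccati

variable {R n : Type*} [CommRing R] [Fintype n] [DecidableEq n]

theorem eq_inv_mul_mul_inv_of_mul_mul_eq {m : Type*} [Fintype m] [DecidableEq m]
    {P : Matrix m m R} {S C : Matrix m n R} {Q : Matrix n n R}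
    (hP : IsUnit P.det) (hQ : IsUnit Q.det) (h : P * S * Q = C) : S = P⁻¹ * C * Q⁻¹ := by
  rw [← h, Matrix.mul_assoc P, nonsing_inv_mul_cancel_left _ _ hP,
    mul_nonsing_inv_cancel_right _ _ hQ]

theorem schurComplement_eq_of_riccati {B X11 X12 X21 X22 : Matrix n n R} (hB : IsUnit B.det)
    (hRic : X22 - 1 = B * X11 * B - B * X12 * X22⁻¹ * X21 * B) :
    X11 - X12 * X22⁻¹ * X21 = B⁻¹ * (X22 - 1) * B⁻¹ := by
  refine eq_inv_mul_mul_inv_of_mul_mul_eq hB hB ?_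
  rw [hRic]
  noncomm_ring

theorem riccati_quadratic_form_identity_general [StarRing R] {B D X11 X12 X22 : Matrix n n R}
    (hB : B.IsHermitian) (hBinv : IsUnit B.det) (hD : D.IsHermitian)
    (hX22 : X22.IsHermitian) (hX22inv : IsUnit X22.det)
    (hRic : X22 - 1 = B * X11 * B - B * X12 * X22⁻¹ * X12ᴴ * B) (x0 w0 : n → R) :
    star (x0 ⊕ᵥ (-((X22⁻¹ * X12ᴴ + D * B⁻¹) *ᵥ x0) + w0)) ⬝ᵥ
        fromBlocks X11 X12 X12ᴴ X22 *ᵥ (x0 ⊕ᵥ (-((X22⁻¹ * X12ᴴ + D * B⁻¹) *ᵥ x0) + w0)) =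
      star (x0 ⊕ᵥ w0) ⬝ᵥ
        fromBlocks (B⁻¹ * (X22 + D * X22 * D - 1) * B⁻¹) (-(B⁻¹ * D * X22))
          (-(X22 * D * B⁻¹)) X22 *ᵥ (x0 ⊕ᵥ w0) := by
  let _ : Invertible X22 := X22.invertibleOfIsUnitDet hX22inv
  have hE : (D * B⁻¹)ᴴ = B⁻¹ * D := by rw [conjTranspose_mul, hB.inv.eq, hD.eq]
  have hcorner : B⁻¹ * (X22 + D * X22 * D - 1) * B⁻¹ =
      X11 - X12 * X22⁻¹ * X12ᴴ + (D * B⁻¹)ᴴ * X22 * (D * B⁻¹) := by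
    rw [schurComplement_eq_of_riccati hBinv hRic, hE]
    noncomm_ring
  rw [star_dotProduct_fromBlocks_mulVec_shift X11 X12 hX22 (D * B⁻¹), hcorner, hE,
    Matrix.mul_assoc X22]

end Riccati

/-- **Identity (20) in the proof of Lemma 2.** Under the sub-Riccati relation
`X22 − I = B X11 B − B X12 X22⁻¹ X12ᵀ B`, setting `ξ0 = −(X22⁻¹X12ᵀ + DB⁻¹)x0 + w0`,
the quadratic form `[x0; ξ0]ᵀ [[X11, X12],[X12ᵀ, X22]] [x0; ξ0]` equals
`[x0; w0]ᵀ [[B⁻¹(X22 + D X22 D − I)B⁻¹, −B⁻¹D X22],[−X22 D B⁻¹, X22]] [x0; w0]`. -/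
theorem riccati_quadratic_form_identity (n : ℕ) (hn : 1 ≤ n)
    (B D : Matrix (Fin n) (Fin n) ℝ)
    (hBdiag : B.IsDiag) (hBinv : IsUnit B.det) (hDdiag : D.IsDiag)
    (X11 X12 X22 : Matrix (Fin n) (Fin n) ℝ)
    (hX11 : X11ᵀ = X11) (hX22 : X22ᵀ = X22) (hX22inv : IsUnit X22.det)
    (hRic : X22 - 1 = B * X11 * B - B * X12 * X22⁻¹ * X12ᵀ * B) :
    ∀ x0 w0 : Fin n → ℝ,
      (Sum.elim x0 (-(X22⁻¹ * X12ᵀ + D * B⁻¹).mulVec x0 + w0)) ⬝ᵥ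
          ((Matrix.fromBlocks X11 X12 X12ᵀ X22).mulVec
            (Sum.elim x0 (-(X22⁻¹ * X12ᵀ + D * B⁻¹).mulVec x0 + w0)))
        = (Sum.elim x0 w0) ⬝ᵥ
            ((Matrix.fromBlocks (B⁻¹ * (X22 + D * X22 * D - 1) * B⁻¹) (-(B⁻¹ * D * X22))
              (-(X22 * D * B⁻¹)) X22).mulVec (Sum.elim x0 w0)) := by
  simpa only [conjTranspose_eq_transpose_of_trivial, star_trivial] using
    riccati_quadratic_form_identity_general (isHermitian_iff_isSymm.mpr hBdiag.isSymm) hBinv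
      (isHermitian_iff_isSymm.mpr hDdiag.isSymm) (isHermitian_iff_isSymm.mpr hX22) hX22inv hRic
end

section
/- Let n ≥ 2, ε_b > 0, and let S_P, S_K ∈ {0,1}^{n×n} be adjacency matrices such that the plant graph G_P has no isolated node, S_K ⊇ S_P entrywise with ones on the diagonal of S_K. Let i be a node that is not a sink of G_P (there exists ℓ ≠ i with (S_P)_{ℓ i} = 1). Let Γ be a limited-model-information control design strategy with totally disconnected design graph mapping into 𝒦(S_K). Suppose there exist A ∈ 𝒜(S_P), B diagonal with |b_kk| ≥ ε_b for all k, D diagonal, and an index j ≠ i such that a_{ij} + b_{ii}·(D_Γ)_{ij}(A,B,D) ≠ 0, where (D_Γ)_{ij}(A,B,D) is the (i,j) entry of the feedthrough matrix of Γ(A,B,D). Then the competitive ratio of Γ is unbounded: for every c > 0 there exist a plant P' = (A',B',D',x0',w0') with A' ∈ 𝒜(S_P), B' diagonal with |b'_kk| ≥ ε_b, D' diagonal, and a controller K ∈ 𝒦(S_K), such that J_{P'}(Γ(A',B',D')) > c · J_{P'}(K). -/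
open Matrix
open scoped ENNReal

/-- State trajectory of the plant `x(k+1) = A x(k) + B (u(k) + w(k))`, `w(k) = D^k w0`. -/
noncomputable def xTraj {n : ℕ} (A B D : Matrix (Fin n) (Fin n) ℝ)
    (x0 w0 : Fin n → ℝ) (u : ℕ → Fin n → ℝ) : ℕ → (Fin n → ℝ)
  | 0 => x0
  | k + 1 => A.mulVec (xTraj A B D x0 w0 u k) + B.mulVec (u k + (D ^ k).mulVec w0)

/-- Cost of a control sequence. -/
noncomputable def cost {n : ℕ} (A B D : Matrix (Fin n) (Fin n) ℝ)
    (x0 w0 : Fin n → ℝ) (u : ℕ → Fin n → ℝ) : ℝ≥0∞ :=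
  ∑' k : ℕ, ENNReal.ofReal ((∑ i, (xTraj A B D x0 w0 u k i) ^ 2)
    + ∑ i, (u k i + (D ^ k).mulVec w0 i) ^ 2)

/-- A dynamic state-feedback controller. -/
structure Ctrl (n : ℕ) : Type 1 where
  σ : Type
  fin : Fintype σ
  dec : DecidableEq σ
  AK : Matrix σ σ ℝ
  BK : Matrix σ (Fin n) ℝ
  CK : Matrix (Fin n) σ ℝ
  DK : Matrix (Fin n) (Fin n) ℝ

/-- Closed-loop state `(x(k), x_K(k))`. -/
noncomputable def clState {n : ℕ} (K : Ctrl n) (A B D : Matrix (Fin n) (Fin n) ℝ)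
    (x0 w0 : Fin n → ℝ) : ℕ → (Fin n → ℝ) × (K.σ → ℝ)
  | 0 => (x0, 0)
  | k + 1 =>
      letI := K.fin
      (A.mulVec (clState K A B D x0 w0 k).1
          + B.mulVec ((K.CK.mulVec (clState K A B D x0 w0 k).2
              + K.DK.mulVec (clState K A B D x0 w0 k).1) + (D ^ k).mulVec w0),
       K.AK.mulVec (clState K A B D x0 w0 k).2 + K.BK.mulVec (clState K A B D x0 w0 k).1)

/-- Control sequence generated by the controller in closed loop. -/
noncomputable def ctrlU {n : ℕ} (K : Ctrl n) (A B D : Matrix (Fin n) (Fin n) ℝ)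
    (x0 w0 : Fin n → ℝ) (k : ℕ) : Fin n → ℝ :=
  letI := K.fin
  K.CK.mulVec (clState K A B D x0 w0 k).2 + K.DK.mulVec (clState K A B D x0 w0 k).1

/-- Closed-loop cost `J_P(K)`. -/
noncomputable def Jcost {n : ℕ} (K : Ctrl n) (A B D : Matrix (Fin n) (Fin n) ℝ)
    (x0 w0 : Fin n → ℝ) : ℝ≥0∞ :=
  cost A B D x0 w0 (ctrlU K A B D x0 w0)

/-- Membership in the structured controller class `𝒦(S_K)`. -/
def memK {n : ℕ} (SK : Fin n → Fin n → Bool) (K : Ctrl n) : Prop :=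
  letI := K.fin
  letI := K.dec
  ∀ i j, SK i j = false → K.DK i j = 0 ∧ ∀ t : ℕ, (K.CK * K.AK ^ t * K.BK) i j = 0

/-- A subcontroller (one block of a limited model information controller). -/
structure SubCtrl (n : ℕ) : Type 1 where
  σ : Type
  fin : Fintype σ
  dec : DecidableEq σ
  AK : Matrix σ σ ℝ
  BK : Matrix σ (Fin n) ℝ
  CK : σ → ℝ
  DK : Fin n → ℝ

/-- Assembling `n` subcontrollers into one controller with block-diagonal `A_K` and `C_K`. -/
noncomputable def assemble {n : ℕ} (γ : Fin n → SubCtrl n) : Ctrl n where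
  σ := Σ i : Fin n, (γ i).σ
  fin := letI : ∀ i, Fintype (γ i).σ := fun i => (γ i).fin; inferInstance
  dec := letI : ∀ i, DecidableEq (γ i).σ := fun i => (γ i).dec; inferInstance
  AK := Matrix.blockDiagonal' (fun i => (γ i).AK)
  BK := fun p j => (γ p.1).BK p.2 j
  CK := fun i q => if q.1 = i then (γ q.1).CK q.2 else 0
  DK := fun i j => (γ i).DK j

/-- A limited model information control design strategy with totally disconnected design
graph: subcontroller `i` is a function of the `i`-th row of `A`, `b_ii` and `d_ii` only. -/
def Strat (n : ℕ) : Type 1 := Fin n → (Fin n → ℝ) → ℝ → ℝ → SubCtrl n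

/-- The controller a strategy produces for the plant `(A, B, D)`. -/
noncomputable def applyStrat {n : ℕ} (Γ : Strat n) (A B D : Matrix (Fin n) (Fin n) ℝ) :
    Ctrl n :=
  assemble (fun i => Γ i (A i) (B i i) (D i i))

/-- Admissible plant data: `A ∈ 𝒜(S_P)`, `B` diagonal with `|b_ii| ≥ ε_b`, `D` diagonal. -/
def Adm {n : ℕ} (SP : Fin n → Fin n → Bool) (εb : ℝ)
    (A B D : Matrix (Fin n) (Fin n) ℝ) : Prop :=
  (∀ i j, SP i j = false → A i j = 0) ∧ B.IsDiag ∧ (∀ i, εb ≤ |B i i|) ∧ D.IsDiag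

/-- The deadbeat subcontroller for subsystem `i`. -/
noncomputable def dbSub {n : ℕ} (i : Fin n) (Ai : Fin n → ℝ) (bii dii : ℝ) : SubCtrl n where
  σ := Fin 1
  fin := inferInstance
  dec := inferInstance
  AK := fun _ _ => dii
  BK := fun _ j => -(bii⁻¹ * dii ^ 2) * (if j = i then 1 else 0)
  CK := fun _ => 1
  DK := fun j => -bii⁻¹ * (Ai j + (if j = i then dii else 0))

/-- The deadbeat control design strategy `Γ^Δ`. -/
noncomputable def dbStrat (n : ℕ) : Strat n := fun i Ai bii dii => dbSub i Ai bii dii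

/-!
Let `i` influence `l`, and suppose that row `i` of `A + B D_Γ` has a nonzero off-diagonal entry `δ`
in column `j`. Keep row `i` of `A`, let node `l` be driven by node `i` with gain `t`, and erase
everything else. The subcontroller of node `i` does not notice the change, so from `x(0) = e_j`
the strategy still produces `x_i(1) = δ`, and the drift `t δ` that reaches node `l` must be paid
for either in the input or in the next state of `l`. A controller cancelling row `i` brings
`e_j` to rest in one step at a cost independent of `t`, and `t` is arbitrary.
-/

section Matrices

variable {ι R : Type*}

lemma isDiag_mulVec_apply [Fintype ι] [NonUnitalNonAssocSemiring R] {B : Matrix ι ι R}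
    (hB : B.IsDiag) (v : ι → R) (p : ι) : (B *ᵥ v) p = B p p * v p := by
  classical
  rw [← hB.diagonal_diag, mulVec_diagonal, diagonal_apply_eq]

lemma isDiag_mul_apply [Fintype ι] [NonUnitalNonAssocSemiring R] {B : Matrix ι ι R}
    (hB : B.IsDiag) {κ : Type*} (N : Matrix ι κ R) (p : ι) (q : κ) :
    (B * N) p q = B p p * N p q :=
  isDiag_mulVec_apply hB (fun s => N s q) p

/-- The system matrix of a plant in which node `i` keeps its dynamics `A i`, node `l` only
receives `t` times the state of node `i`, and all other nodes are inert. It is meant for `l ≠ i`;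
for `l = i` the gain `t` is overwritten. -/
def relayMatrix [DecidableEq ι] [Zero R] (A : Matrix ι ι R) (i l : ι) (t : R) : Matrix ι ι R :=
  (Matrix.single l i t).updateRow i (A i)

lemma relayMatrix_self [DecidableEq ι] [Zero R] (A : Matrix ι ι R) (i l : ι) (t : R) :
    relayMatrix A i l t i = A i :=
  updateRow_self

lemma relayMatrix_apply_eq_zero [DecidableEq ι] [Zero R] {A : Matrix ι ι R} {i l p q : ι}
    (hA : A p q = 0) (hpq : ¬(l = p ∧ i = q)) (t : R) : relayMatrix A i l t p q = 0 := by
  by_cases hp : p = i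
  · rw [hp, relayMatrix_self, ← hp, hA]
  · rw [relayMatrix, updateRow_ne hp, single_apply_of_ne _ _ _ _ _ hpq]

lemma relayMatrix_mulVec_apply [Fintype ι] [DecidableEq ι] [NonUnitalNonAssocSemiring R]
    (A : Matrix ι ι R) {i l : ι} (hli : l ≠ i) (t : R) (v : ι → R) :
    (relayMatrix A i l t *ᵥ v) l = t * v i := by
  simp [relayMatrix, mulVec, updateRow_ne hli, dotProduct, single_apply]

/-- The feedback gain that acts on node `i` only and cancels row `i` of `A` when `B` is diagonal
with `B i i ≠ 0`. -/
def rowCancelGain [DecidableEq ι] [DivisionRing R] (A B : Matrix ι ι R) (i : ι) : Matrix ι ι R :=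
  updateRow 0 i (-(B i i)⁻¹ • A i)

lemma rowCancelGain_congr [DecidableEq ι] [DivisionRing R] {A A' : Matrix ι ι R} {i : ι}
    (h : A' i = A i) (B : Matrix ι ι R) : rowCancelGain A' B i = rowCancelGain A B i := by
  rw [rowCancelGain, h, rowCancelGain]

lemma rowCancelGain_apply_eq_zero [DecidableEq ι] [DivisionRing R] {A : Matrix ι ι R} {p q : ι}
    (hA : A p q = 0) (B : Matrix ι ι R) (i : ι) : rowCancelGain A B i p q = 0 := by
  by_cases hp : p = i
  · subst hp
    simp [rowCancelGain, hA]
  · simp [rowCancelGain, hp]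

lemma add_mul_rowCancelGain [Fintype ι] [DecidableEq ι] [DivisionRing R] (A : Matrix ι ι R)
    {B : Matrix ι ι R} (hB : B.IsDiag) {i : ι} (hBi : B i i ≠ 0) :
    A + B * rowCancelGain A B i = A.updateRow i 0 := by
  ext p q
  rw [Matrix.add_apply, isDiag_mul_apply hB]
  by_cases hp : p = i
  · subst hp
    simp [rowCancelGain, hBi]
  · simp [rowCancelGain, hp]

lemma relayMatrix_add_mul_rowCancelGain_mulVec_single [Fintype ι] [DecidableEq ι] [DivisionRing R]
    (A : Matrix ι ι R) {B : Matrix ι ι R} (hB : B.IsDiag) {i j : ι} (hBi : B i i ≠ 0)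
    (hji : j ≠ i) (l : ι) (t : R) :
    (relayMatrix A i l t + B * rowCancelGain A B i) *ᵥ Pi.single j 1 = 0 := by
  rw [← rowCancelGain_congr (relayMatrix_self A i l t), add_mul_rowCancelGain _ hB hBi,
    relayMatrix, updateRow_idem]
  ext p
  by_cases hp : p = i
  · simp [hp]
  · simp [hp, hji.symm]

end Matrices

section OrderedField

variable {R : Type*} [Field R] [LinearOrder R] [IsStrictOrderedRing R]

-- Cauchy–Schwarz for `a = (a + b v) · 1 + v · (-b)`.
lemma sq_div_one_add_sq_le (a b v : R) : a ^ 2 / (1 + b ^ 2) ≤ v ^ 2 + (a + b * v) ^ 2 := by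
  rw [div_le_iff₀ (by positivity)]
  linarith [sq_nonneg (v + b * (a + b * v))]

lemma exists_lt_mul_sq_div {δ q : R} (hδ : δ ≠ 0) (hq : 0 < q) (r : R) :
    ∃ t : R, r < (t * δ) ^ 2 / q := by
  refine ⟨(|r * q| + 1) / δ, ?_⟩
  rw [div_mul_cancel₀ _ hδ, lt_div_iff₀ hq]
  calc r * q ≤ |r * q| := le_abs_self _
    _ < |r * q| + 1 := lt_add_one _
    _ ≤ (|r * q| + 1) ^ 2 := le_self_pow₀ (le_add_of_nonneg_left (abs_nonneg _)) two_ne_zero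

end OrderedField

section ClosedLoop

variable {n : ℕ} {A B D : Matrix (Fin n) (Fin n) ℝ} {x0 w0 : Fin n → ℝ}

lemma xTraj_ctrlU (K : Ctrl n) (k : ℕ) :
    xTraj A B D x0 w0 (ctrlU K A B D x0 w0) k = (clState K A B D x0 w0 k).1 := by
  induction k with
  | zero => rfl
  | succ k ih => rw [xTraj, ih]; rfl

lemma xTraj_ctrlU_one (K : Ctrl n) :
    xTraj A B D x0 w0 (ctrlU K A B D x0 w0) 1 = (A + B * K.DK) *ᵥ x0 + B *ᵥ w0 := by
  simp [xTraj, ctrlU, clState, add_mulVec, mulVec_add, add_assoc]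

lemma ofReal_sq_add_sq_le_cost (u : ℕ → Fin n → ℝ) (k : ℕ) (p q : Fin n) :
    ENNReal.ofReal ((u k p + (D ^ k *ᵥ w0) p) ^ 2 + xTraj A B D x0 w0 u (k + 1) q ^ 2)
      ≤ cost A B D x0 w0 u := by
  have sq_le_sum (v : Fin n → ℝ) (p : Fin n) : v p ^ 2 ≤ ∑ s, v s ^ 2 :=
    Finset.single_le_sum (f := fun s => v s ^ 2) (fun s _ => sq_nonneg (v s)) (Finset.mem_univ p)
  refine le_trans ?_ (ENNReal.sum_le_tsum {k, k + 1})
  rw [Finset.sum_pair k.lt_succ_self.ne, ENNReal.ofReal_add (sq_nonneg _) (sq_nonneg _)]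
  gcongr
  · exact le_add_of_nonneg_of_le (by positivity) (sq_le_sum (u k + D ^ k *ᵥ w0) p)
  · exact le_add_of_le_of_nonneg (sq_le_sum _ q) (by positivity)

lemma ofReal_drift_sq_div_le_cost (hB : B.IsDiag) (u : ℕ → Fin n → ℝ) (k : ℕ) (l : Fin n) :
    ENNReal.ofReal ((A *ᵥ xTraj A B D x0 w0 u k) l ^ 2 / (1 + B l l ^ 2))
      ≤ cost A B D x0 w0 u := by
  refine (ENNReal.ofReal_le_ofReal ?_).trans (ofReal_sq_add_sq_le_cost u k l l)
  rw [xTraj, Pi.add_apply, isDiag_mulVec_apply hB, Pi.add_apply]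
  exact sq_div_one_add_sq_le _ _ _

/-- The static state feedback `u(k) = F x(k)`, as a controller with an empty internal state. -/
noncomputable def staticCtrl (F : Matrix (Fin n) (Fin n) ℝ) : Ctrl n where
  σ := Empty
  fin := inferInstance
  dec := inferInstance
  AK := 0
  BK := 0
  CK := 0
  DK := F

lemma memK_staticCtrl_iff {S : Fin n → Fin n → Bool} {F : Matrix (Fin n) (Fin n) ℝ} :
    memK S (staticCtrl F) ↔ ∀ i j, S i j = false → F i j = 0 := by
  refine forall₃_congr fun i j _ => and_iff_left fun t => ?_
  change ((0 : Matrix (Fin n) Empty ℝ) * (0 : Matrix Empty Empty ℝ) ^ t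
    * (0 : Matrix Empty (Fin n) ℝ)) i j = 0
  simp

lemma ctrlU_staticCtrl (F : Matrix (Fin n) (Fin n) ℝ) (k : ℕ) :
    ctrlU (staticCtrl F) A B D x0 w0 k
      = F *ᵥ xTraj A B D x0 w0 (ctrlU (staticCtrl F) A B D x0 w0) k := by
  rw [xTraj_ctrlU, ctrlU]
  let := (staticCtrl F).fin
  exact add_eq_right.mpr (zero_mulVec _)

lemma xTraj_staticCtrl_succ_eq_zero {F : Matrix (Fin n) (Fin n) ℝ}
    (hF : (A + B * F) *ᵥ x0 = 0) (k : ℕ) :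
    xTraj A B D x0 0 (ctrlU (staticCtrl F) A B D x0 0) (k + 1) = 0 := by
  induction k with
  | zero =>
    rw [xTraj_ctrlU_one, mulVec_zero, add_zero]
    exact hF
  | succ k ih =>
    rw [xTraj, ctrlU_staticCtrl, ih]
    simp

lemma Jcost_staticCtrl_of_mulVec_eq_zero {F : Matrix (Fin n) (Fin n) ℝ}
    (hF : (A + B * F) *ᵥ x0 = 0) :
    Jcost (staticCtrl F) A B D x0 0
      = ENNReal.ofReal ((∑ p, x0 p ^ 2) + ∑ p, (F *ᵥ x0) p ^ 2) := by
  rw [Jcost, cost, tsum_eq_single 0]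
  · simp [ctrlU_staticCtrl, xTraj]
  · intro k hk
    obtain ⟨k, rfl⟩ := Nat.exists_eq_succ_of_ne_zero hk
    simp [ctrlU_staticCtrl (k := k + 1), xTraj_staticCtrl_succ_eq_zero hF]

lemma applyStrat_DK_congr (Γ : Strat n) {A' B' D' : Matrix (Fin n) (Fin n) ℝ} {i : Fin n}
    (hA : A' i = A i) (hB : B' i i = B i i) (hD : D' i i = D i i) :
    (applyStrat Γ A' B' D').DK i = (applyStrat Γ A B D).DK i := by
  simp only [applyStrat, assemble, hA, hB, hD]

lemma ofReal_gain_sq_div_le_Jcost_relayMatrix (hB : B.IsDiag) {i l : Fin n} (hli : l ≠ i)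
    (K : Ctrl n) (j : Fin n) (t : ℝ) :
    ENNReal.ofReal ((t * (A i j + B i i * K.DK i j)) ^ 2 / (1 + B l l ^ 2))
      ≤ Jcost K (relayMatrix A i l t) B D (Pi.single j 1) 0 := by
  have hx : xTraj (relayMatrix A i l t) B D (Pi.single j 1) 0
      (ctrlU K (relayMatrix A i l t) B D (Pi.single j 1) 0) 1 i = A i j + B i i * K.DK i j := by
    simp [xTraj_ctrlU_one, isDiag_mul_apply hB, relayMatrix_self]
  rw [← hx, ← relayMatrix_mulVec_apply A hli]
  exact ofReal_drift_sq_div_le_cost hB _ 1 l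

end ClosedLoop

theorem nonsink_feedthrough_unbounded_ratio_general {n : ℕ} {εb : ℝ} (hεb : 0 < εb)
    {SP SK : Fin n → Fin n → Bool} (hsup : ∀ i j, SP i j = true → SK i j = true)
    {i : Fin n} (hnotsink : ∃ l : Fin n, l ≠ i ∧ SP l i = true) (Γ : Strat n)
    (hbad : ∃ (A B D : Matrix (Fin n) (Fin n) ℝ) (j : Fin n), Adm SP εb A B D ∧ j ≠ i ∧
      A i j + B i i * (applyStrat Γ A B D).DK i j ≠ 0) {c : ℝ} (hc : 0 < c) :
    ∃ (A' B' D' : Matrix (Fin n) (Fin n) ℝ) (x0' w0' : Fin n → ℝ) (K : Ctrl n),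
      Adm SP εb A' B' D' ∧ memK SK K ∧
        ENNReal.ofReal c * Jcost K A' B' D' x0' w0'
          < Jcost (applyStrat Γ A' B' D') A' B' D' x0' w0' := by
  obtain ⟨l, hli, hSPli⟩ := hnotsink
  obtain ⟨A, B, D, j, ⟨hA, hB, hBε, hD⟩, hji, hδ⟩ := hbad
  have hBi : B i i ≠ 0 := abs_pos.mp (hεb.trans_le (hBε i))
  set A' : ℝ → Matrix (Fin n) (Fin n) ℝ := relayMatrix A i l
  set F := rowCancelGain A B i
  set e : Fin n → ℝ := Pi.single j 1
  set M : ℝ := (∑ p, e p ^ 2) + ∑ p, (F *ᵥ e) p ^ 2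
  obtain ⟨t, ht⟩ := exists_lt_mul_sq_div hδ (by positivity : 0 < 1 + B l l ^ 2) (c * M)
  have hA' (p q : Fin n) (hpq : SP p q = false) : A' t p q = 0 :=
    relayMatrix_apply_eq_zero (hA p q hpq) (by grind) t
  have hF : memK SK (staticCtrl F) :=
    memK_staticCtrl_iff.mpr fun p q hpq => rowCancelGain_apply_eq_zero (hA p q (by grind)) B i
  have hJF : Jcost (staticCtrl F) (A' t) B D e 0 = ENNReal.ofReal M :=
    Jcost_staticCtrl_of_mulVec_eq_zero
      (relayMatrix_add_mul_rowCancelGain_mulVec_single A hB hBi hji l t)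
  refine ⟨A' t, B, D, e, 0, staticCtrl F, ⟨hA', hB, hBε, hD⟩, hF, ?_⟩
  rw [hJF, ← ENNReal.ofReal_mul hc.le]
  rw [← applyStrat_DK_congr Γ (relayMatrix_self A i l t) rfl rfl] at ht
  refine lt_of_lt_of_le ?_ (ofReal_gain_sq_div_le_Jcost_relayMatrix hB hli _ j t)
  exact (ENNReal.ofReal_lt_ofReal_iff_of_nonneg (by positivity)).mpr ht

/-- **Lemma 6 (lem:2).** If node `i` is not a sink of the plant graph and the limited model
information strategy `Γ` (with totally disconnected design graph) produces, for some
admissible `(A,B,D)` and some `j ≠ i`, a feedthrough with `a_ij + b_ii (d_Γ)_ij ≠ 0`, then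
the competitive ratio of `Γ` is unbounded: for every `c > 0` there are an admissible plant
and a controller `K ∈ 𝒦(S_K)` with `J_{P'}(Γ(A',B',D')) > c · J_{P'}(K)`. -/
theorem nonsink_feedthrough_unbounded_ratio (n : ℕ) (hn : 2 ≤ n) (εb : ℝ) (hεb : 0 < εb)
    (SP SK : Fin n → Fin n → Bool)
    (hnoiso : ∀ i : Fin n, ∃ j : Fin n, j ≠ i ∧ (SP i j = true ∨ SP j i = true))
    (hsup : ∀ i j, SP i j = true → SK i j = true)
    (hself : ∀ i, SK i i = true)
    (i : Fin n) (hnotsink : ∃ l : Fin n, l ≠ i ∧ SP l i = true)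
    (Γ : Strat n)
    (hΓmem : ∀ A B D : Matrix (Fin n) (Fin n) ℝ, Adm SP εb A B D →
      memK SK (applyStrat Γ A B D))
    (hbad : ∃ (A B D : Matrix (Fin n) (Fin n) ℝ) (j : Fin n), Adm SP εb A B D ∧ j ≠ i ∧
      A i j + B i i * (applyStrat Γ A B D).DK i j ≠ 0) :
    ∀ c : ℝ, 0 < c →
      ∃ (A' B' D' : Matrix (Fin n) (Fin n) ℝ) (x0' w0' : Fin n → ℝ) (K : Ctrl n),
        Adm SP εb A' B' D' ∧ memK SK K ∧
          ENNReal.ofReal c * Jcost K A' B' D' x0' w0'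
            < Jcost (applyStrat Γ A' B' D') A' B' D' x0' w0' :=
  fun _ hc => nonsink_feedthrough_unbounded_ratio_general hεb hsup hnotsink Γ hbad hc
end
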